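/- arXiv:2110.11812 — 4 statements merged into one kernel-verified Lean document; each statement's English description precedes it below -/
import Mathlib

section
/- Fix d ≥ 1, real numbers s_1, …, s_d > 0 and z_1, …, z_d with z_i ≠ 0 for all i. Define the likelihood L(γ) = ∏_{i=1}^d (2π γ_i s_i)^{-1/2} · exp(-z_i² / (2 γ_i s_i)) for γ ∈ (0,∞)^d. Then L attains its strict global maximum over (0,∞)^d exactly at the point γ̂ with γ̂_i = z_i² / s_i for each i. -/
open Real

theorem quasi_mle_scalar (s z g : ℝ) (hs : 0 < s) (hz : z ≠ 0) (hg : 0 < g)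
    (hne : g ≠ z ^ 2 / s) :
    (2 * π * g * s) ^ (-(1 : ℝ) / 2) * Real.exp (-z ^ 2 / (2 * g * s))
      < (2 * π * (z ^ 2 / s) * s) ^ (-(1 : ℝ) / 2) *
          Real.exp (-z ^ 2 / (2 * (z ^ 2 / s) * s)) := by
  have ha : 0 < z ^ 2 := by positivity
  have hx : 0 < g * s := by positivity
  have hpi : 0 < 2 * π := by positivity
  have e1 : 2 * π * (z ^ 2 / s) * s = 2 * π * z ^ 2 := by field_simp
  have e2 : -z ^ 2 / (2 * (z ^ 2 / s) * s) = -(1 / 2) := by field_simp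
  have e3 : 2 * π * g * s = 2 * π * (g * s) := by ring
  have e4 : -z ^ 2 / (2 * g * s) = -(z ^ 2 / (g * s)) / 2 := by field_simp
  have hr : z ^ 2 / (g * s) ≠ 1 := by
    intro h
    apply hne
    rw [div_eq_one_iff_eq hx.ne'] at h
    rw [h]
    field_simp
  have hl := Real.log_lt_sub_one_of_pos (div_pos ha hx) hr
  rw [Real.log_div ha.ne' hx.ne'] at hl
  rw [e1, e2, e3, e4, Real.rpow_def_of_pos (mul_pos hpi hx),
    Real.rpow_def_of_pos (mul_pos hpi ha), ← Real.exp_add, ← Real.exp_add, Real.exp_lt_exp,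
    Real.log_mul hpi.ne' hx.ne', Real.log_mul hpi.ne' ha.ne']
  linarith

/-- The Gaussian quasi-likelihood with diagonal covariance
`diag(γ_i s_i)` attains its strict global maximum over `(0,∞)^d` exactly at
`γ̂_i = z_i² / s_i` (Proposition 1: time-varying, vector-valued diffusion). -/
theorem quasi_mle_vector_valued_time_varying (d : ℕ) (hd : 1 ≤ d)
    (s z : Fin d → ℝ) (hs : ∀ i, 0 < s i) (hz : ∀ i, z i ≠ 0) :
    ∀ γ : Fin d → ℝ, (∀ i, 0 < γ i) → γ ≠ (fun i => (z i) ^ 2 / s i) →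
      (∏ i, (2 * π * γ i * s i) ^ (-(1 : ℝ) / 2) *
          Real.exp (-(z i) ^ 2 / (2 * γ i * s i)))
        < ∏ i, (2 * π * ((z i) ^ 2 / s i) * s i) ^ (-(1 : ℝ) / 2) *
          Real.exp (-(z i) ^ 2 / (2 * ((z i) ^ 2 / s i) * s i)) := by
  intro γ hγ hne
  obtain ⟨j, hj⟩ := Function.ne_iff.mp hne
  apply Finset.prod_lt_prod
  · intro i _
    have h1 := hγ i
    have h2 := hs i
    positivity
  · intro i _
    by_cases h : γ i = z i ^ 2 / s i
    · rw [h]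
    · exact (quasi_mle_scalar (s i) (z i) (γ i) (hs i) (hz i) (hγ i) h).le
  · exact ⟨j, Finset.mem_univ j,
      quasi_mle_scalar (s j) (z j) (γ j) (hs j) (hz j) (hγ j) hj⟩
end

section
/- Let S be a symmetric positive-definite d×d real matrix and z ∈ ℝ^d with z ≠ 0. Define L(c) = (2π)^{-d/2} (det(c • S))^{-1/2} exp(- zᵀ (c • S)⁻¹ z / 2) for c > 0, where c • S denotes the scalar multiple of S. Then L attains its strict global maximum over (0,∞) exactly at ĉ = (zᵀ S⁻¹ z) / d. -/
open Real Matrix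

/-- For a symmetric positive-definite `S` and `z ≠ 0`, the Gaussian
density `L(c) = (2π)^{-d/2} det(c•S)^{-1/2} exp(-zᵀ(c•S)⁻¹z/2)` attains its
strict global maximum over `(0,∞)` exactly at `ĉ = (zᵀ S⁻¹ z)/d`
(time-varying scalar-diffusion quasi-MLE, Eq. (18)). -/
theorem quasi_mle_scalar_diffusion (d : ℕ) (hd : 1 ≤ d)
    (S : Matrix (Fin d) (Fin d) ℝ) (hS : S.PosDef)
    (z : Fin d → ℝ) (hz : z ≠ 0) :
    ∀ c : ℝ, 0 < c → c ≠ (z ⬝ᵥ (S⁻¹ *ᵥ z)) / d →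
      (2 * π) ^ (-(d : ℝ) / 2) * (Matrix.det (c • S)) ^ (-(1 : ℝ) / 2) *
          Real.exp (-(z ⬝ᵥ ((c • S)⁻¹ *ᵥ z)) / 2)
        < (2 * π) ^ (-(d : ℝ) / 2) *
            (Matrix.det (((z ⬝ᵥ (S⁻¹ *ᵥ z)) / d) • S)) ^ (-(1 : ℝ) / 2) *
            Real.exp (-(z ⬝ᵥ ((((z ⬝ᵥ (S⁻¹ *ᵥ z)) / d) • S)⁻¹ *ᵥ z)) / 2) := by
  intro c hc hne
  have hq : 0 < z ⬝ᵥ (S⁻¹ *ᵥ z) := by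
    have h := hS.inv.dotProduct_mulVec_pos hz
    simpa using h
  have hd0 : (0 : ℝ) < d := by exact_mod_cast hd
  have hdet : 0 < S.det := hS.det_pos
  have key : ∀ a : ℝ, 0 < a →
      (Matrix.det (a • S)) ^ (-(1 : ℝ) / 2) * Real.exp (-(z ⬝ᵥ ((a • S)⁻¹ *ᵥ z)) / 2)
        = Real.exp ((d * Real.log a + Real.log S.det) * (-(1 : ℝ) / 2)
            + -(a⁻¹ * (z ⬝ᵥ (S⁻¹ *ᵥ z))) / 2) := by
    intro a ha
    have hinv : (a • S)⁻¹ = a⁻¹ • S⁻¹ := by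
      apply Matrix.inv_eq_right_inv
      rw [Matrix.smul_mul, Matrix.mul_smul, smul_smul, mul_inv_cancel₀ ha.ne', one_smul,
        Matrix.mul_nonsing_inv _ hdet.ne'.isUnit]
    rw [hinv, Matrix.smul_mulVec, dotProduct_smul, smul_eq_mul, Matrix.det_smul,
      Fintype.card_fin, Real.rpow_def_of_pos (by positivity),
      Real.log_mul (by positivity) hdet.ne', Real.log_pow, ← Real.exp_add]
  generalize hQ : z ⬝ᵥ (S⁻¹ *ᵥ z) = q at *
  have hm : 0 < q / d := by positivity
  rw [mul_assoc, mul_assoc, key c hc, key _ hm]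
  apply mul_lt_mul_of_pos_left _ (by positivity)
  apply Real.exp_lt_exp.mpr
  have hlog : Real.log (q / d / c) < q / d / c - 1 := by
    apply Real.log_lt_sub_one_of_pos (by positivity)
    intro h
    rw [div_eq_one_iff_eq hc.ne'] at h
    exact hne h.symm
  rw [Real.log_div hm.ne' hc.ne'] at hlog
  have h1 := mul_lt_mul_of_pos_left hlog hd0
  have h2 : (d : ℝ) * (q / d / c - 1) = c⁻¹ * q - d := by field_simp
  have h3 : (q / d)⁻¹ * q = d := by field_simp
  rw [h2] at h1
  rw [h3]
  linarith
end

section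
/- Let Γ be an invertible d×d real matrix, C̆ a (ν+1)×(ν+1) real matrix, e_1 ∈ ℝ^{ν+1} the basis vector with index 1 regarded as a (ν+1)×1 matrix, and suppose s := e_1ᵀ C̆ e_1 ≠ 0 (as a real number). Then the Kalman gain K := (Γ ⊗ C̆)(I_d ⊗ e_1) · ((s • Γ)⁻¹) equals I_d ⊗ (s⁻¹ • (C̆ e_1)); in particular K is a Kronecker product with identity left factor, independent of Γ. -/
open Matrix Kronecker

/-- The standard basis vector `e_1 ∈ ℝ^{ν+1}` (indices `0,…,ν`), regarded as a
`(ν+1)×1` matrix. -/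
def e1col (ν : ℕ) : Matrix (Fin (ν + 1)) (Fin 1) ℝ :=
  Matrix.of fun q _ => if q = 1 then 1 else 0

/-- For invertible `Γ` and `s := e_1ᵀ C̆ e_1 ≠ 0`, the EK0 Kalman
gain `K = (Γ ⊗ C̆)(I_d ⊗ e_1)(s • Γ)⁻¹` equals `I_d ⊗ (s⁻¹ • C̆ e_1)`: it is a
Kronecker product with identity left factor, independent of `Γ`
(step (v) of the proof of Proposition 3). -/
theorem ek0_kalman_gain_kronecker (d ν : ℕ) (hd : 1 ≤ d) (hν : 1 ≤ ν)
    (Γ : Matrix (Fin d) (Fin d) ℝ) (hΓ : IsUnit Γ.det)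
    (C : Matrix (Fin (ν + 1)) (Fin (ν + 1)) ℝ)
    (hs : ((e1col ν)ᵀ * C * e1col ν) 0 0 ≠ 0) :
    (Γ ⊗ₖ C) * ((1 : Matrix (Fin d) (Fin d) ℝ) ⊗ₖ e1col ν) *
        (((((e1col ν)ᵀ * C * e1col ν) 0 0) • Γ)⁻¹ ⊗ₖ (1 : Matrix (Fin 1) (Fin 1) ℝ))
      = (1 : Matrix (Fin d) (Fin d) ℝ) ⊗ₖ
          (((((e1col ν)ᵀ * C * e1col ν) 0 0)⁻¹) • (C * e1col ν)) := by
  generalize ((e1col ν)ᵀ * C * e1col ν) 0 0 = s at hs ⊢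
  have hinv : (s • Γ)⁻¹ = s⁻¹ • Γ⁻¹ := by
    apply Matrix.inv_eq_right_inv
    rw [Matrix.smul_mul, Matrix.mul_smul, smul_smul, mul_inv_cancel₀ hs, one_smul,
      Matrix.mul_nonsing_inv _ hΓ]
  rw [hinv, ← Matrix.mul_kronecker_mul, ← Matrix.mul_kronecker_mul, Matrix.mul_one,
    Matrix.mul_one, Matrix.mul_smul, Matrix.mul_nonsing_inv _ hΓ, Matrix.smul_kronecker,
    Matrix.kronecker_smul]
end

section
/- Fix d ≥ 1 and m ≥ 1. For each i = 1,…,d let C_i be a symmetric m×m real matrix, H_i a 1×m real matrix (a row vector), z_i a real number, and m_i ∈ ℝ^m, and suppose s_i := H_i C_i H_iᵀ ≠ 0 (as a real number). Let C = blockDiagonal(C_1,…,C_d), let H be the block-diagonal matrix with 1×m diagonal blocks H_1,…,H_d, let S := H C Hᵀ (a d×d diagonal matrix with entries s_i), let z = (z_1,…,z_d) ∈ ℝ^d and m = (m_1,…,m_d) ∈ ℝ^{dm}. Then the corrected mean m - C Hᵀ S⁻¹ z decomposes blockwise: its i-th block equals m_i - (z_i / s_i) • (C_i H_iᵀ), and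 the Joseph factor Ξ := I - C Hᵀ S⁻¹ H equals blockDiagonal(Ξ_1,…,Ξ_d) with Ξ_i = I_m - (1/s_i) • (C_i H_iᵀ H_i), so that Ξ C Ξᵀ = blockDiagonal(Ξ_1 C_1 Ξ_1ᵀ, …, Ξ_d C_d Ξ_dᵀ). -/
open Matrix

/-- Steps (v)–(vi) of the proof of Proposition 2: with
block-diagonal covariance `C = blockDiagonal(C_1,…,C_d)` and block-diagonal
measurement matrix `H` with `1×m` blocks `H_i`, and `s_i = H_i C_i H_iᵀ ≠ 0`,
the Kalman mean correction `m - C Hᵀ S⁻¹ z` decomposes blockwise as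
`m_i - (z_i/s_i) • (C_i H_iᵀ)`, the Joseph factor `Ξ = I - C Hᵀ S⁻¹ H` is
block diagonal with blocks `Ξ_i = I - s_i⁻¹ • (C_i H_iᵀ H_i)`, and
`Ξ C Ξᵀ = blockDiagonal(Ξ_1 C_1 Ξ_1ᵀ, …, Ξ_d C_d Ξ_dᵀ)`. -/
theorem blockwise_kalman_correction (d m : ℕ) (hd : 1 ≤ d) (hm : 1 ≤ m)
    (C : Fin d → Matrix (Fin m) (Fin m) ℝ) (hC : ∀ i, (C i)ᵀ = C i)
    (H : Fin d → Matrix (Fin 1) (Fin m) ℝ)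
    (z : Fin d → ℝ) (mv : Fin d → Fin m → ℝ)
    (hs : ∀ i, (H i * C i * (H i)ᵀ) 0 0 ≠ 0) :
    (∀ (i : Fin d) (q : Fin m),
      ((fun p : Fin m × Fin d => mv p.2 p.1) -
          (Matrix.blockDiagonal C * (Matrix.blockDiagonal H)ᵀ *
              (Matrix.blockDiagonal H * Matrix.blockDiagonal C *
                (Matrix.blockDiagonal H)ᵀ)⁻¹) *ᵥ
            (fun p : Fin 1 × Fin d => z p.2)) (q, i)
        = mv i q - (z i / (H i * C i * (H i)ᵀ) 0 0) * (C i * (H i)ᵀ) q 0) ∧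
    (1 - Matrix.blockDiagonal C * (Matrix.blockDiagonal H)ᵀ *
          (Matrix.blockDiagonal H * Matrix.blockDiagonal C *
            (Matrix.blockDiagonal H)ᵀ)⁻¹ * Matrix.blockDiagonal H
      = Matrix.blockDiagonal (fun i =>
          1 - (((H i * C i * (H i)ᵀ) 0 0)⁻¹) • (C i * (H i)ᵀ * H i))) ∧
    ((1 - Matrix.blockDiagonal C * (Matrix.blockDiagonal H)ᵀ *
            (Matrix.blockDiagonal H * Matrix.blockDiagonal C *
              (Matrix.blockDiagonal H)ᵀ)⁻¹ * Matrix.blockDiagonal H) *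
          Matrix.blockDiagonal C *
          (1 - Matrix.blockDiagonal C * (Matrix.blockDiagonal H)ᵀ *
              (Matrix.blockDiagonal H * Matrix.blockDiagonal C *
                (Matrix.blockDiagonal H)ᵀ)⁻¹ * Matrix.blockDiagonal H)ᵀ
      = Matrix.blockDiagonal (fun i =>
          (1 - (((H i * C i * (H i)ᵀ) 0 0)⁻¹) • (C i * (H i)ᵀ * H i)) * C i *
            (1 - (((H i * C i * (H i)ᵀ) 0 0)⁻¹) • (C i * (H i)ᵀ * H i))ᵀ)) := by
  have hK : Matrix.blockDiagonal C * (Matrix.blockDiagonal H)ᵀ *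
      (Matrix.blockDiagonal H * Matrix.blockDiagonal C * (Matrix.blockDiagonal H)ᵀ)⁻¹
      = Matrix.blockDiagonal (fun i => (((H i * C i * (H i)ᵀ) 0 0)⁻¹) • (C i * (H i)ᵀ)) := by
    have hinv : (Matrix.blockDiagonal H * Matrix.blockDiagonal C * (Matrix.blockDiagonal H)ᵀ)⁻¹
        = Matrix.blockDiagonal (fun i =>
            (((H i * C i * (H i)ᵀ) 0 0)⁻¹) • (1 : Matrix (Fin 1) (Fin 1) ℝ)) := by
      apply Matrix.inv_eq_right_inv
      rw [Matrix.blockDiagonal_transpose, ← Matrix.blockDiagonal_mul,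
        ← Matrix.blockDiagonal_mul, ← Matrix.blockDiagonal_mul, ← Matrix.blockDiagonal_one]
      congr 1
      funext i
      rw [Matrix.mul_smul, Matrix.mul_one]
      ext a b
      fin_cases a
      fin_cases b
      simpa using inv_mul_cancel₀ (hs i)
    rw [hinv, Matrix.blockDiagonal_transpose, ← Matrix.blockDiagonal_mul,
      ← Matrix.blockDiagonal_mul]
    congr 1
    funext i
    rw [Matrix.mul_smul, Matrix.mul_one]
  have hX : 1 - Matrix.blockDiagonal C * (Matrix.blockDiagonal H)ᵀ *
          (Matrix.blockDiagonal H * Matrix.blockDiagonal C *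
            (Matrix.blockDiagonal H)ᵀ)⁻¹ * Matrix.blockDiagonal H
      = Matrix.blockDiagonal (fun i =>
          1 - (((H i * C i * (H i)ᵀ) 0 0)⁻¹) • (C i * (H i)ᵀ * H i)) := by
    rw [hK, ← Matrix.blockDiagonal_mul, ← Matrix.blockDiagonal_one,
      ← Matrix.blockDiagonal_sub]
    congr 1
    funext i
    simp only [Pi.sub_apply, Pi.one_apply, Matrix.smul_mul]
  refine ⟨?_, hX, ?_⟩
  · intro i q
    rw [hK]
    simp only [Pi.sub_apply, Matrix.mulVec, dotProduct, Fintype.sum_prod_type,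
      Matrix.blockDiagonal_apply, Finset.univ_unique, Finset.sum_singleton, ite_mul, zero_mul,
      Finset.sum_ite_eq, Finset.mem_univ, if_true, Matrix.smul_apply, smul_eq_mul,
      Fin.default_eq_zero]
    ring
  · rw [hX, Matrix.blockDiagonal_transpose, ← Matrix.blockDiagonal_mul,
      ← Matrix.blockDiagonal_mul]
end
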